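/- Let f be a Δ-function on ω₂. Then every uncountable family F of conditions in P_f contains two elements which are good twins. Consequently every uncountable subset of P_f contains two compatible conditions, i.e. P_f satisfies the countable chain condition. -/

import Mathlib

attribute [local instance] Classical.propDecidable

noncomputable section

/-- The second uncountable cardinal ω₂, as an ordinal. -/
def omega2 : Ordinal := (Cardinal.aleph 2).ord

/-- The operation `x * y` on nonempty finite sets of ordinals with `max x ≠ max y`:
`x \ y` if `max x ∈ y`, `y \ x` if `max y ∈ x`, and `x ∩ y` otherwise. -/
def ostar (x y : Finset Ordinal) : Finset Ordinal :=
  if ∃ m ∈ y, x.max = (m : WithBot Ordinal) then x \ y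
  else if ∃ m ∈ x, y.max = (m : WithBot Ordinal) then y \ x
  else x ∩ y

/-- The conditions of the poset `P_f`: triples `(a, h, i)` where `a` is a finite
subset of ω₂, `h : a → 𝒫(a)` with `max (h ξ) = ξ`, `i : [a]² → 𝒫(a)` with
`i {ξ,η} ⊆ f {ξ,η}`, and `h ξ * h η ⊆ ⋃ {h ν : ν ∈ i {ξ,η}}`. -/
structure PfCond (f : Ordinal → Ordinal → Set Ordinal) where
  a : Finset Ordinal
  h : Ordinal → Finset Ordinal
  i : Ordinal → Ordinal → Finset Ordinal
  a_lt : ∀ ξ ∈ a, ξ < omega2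
  h_sub : ∀ ξ ∈ a, h ξ ⊆ a
  h_mem : ∀ ξ ∈ a, ξ ∈ h ξ
  h_le : ∀ ξ ∈ a, ∀ η ∈ h ξ, η ≤ ξ
  i_symm : ∀ ξ η, i ξ η = i η ξ
  i_sub_f : ∀ ξ ∈ a, ∀ η ∈ a, ξ ≠ η → ∀ ν ∈ i ξ η, ν ∈ f ξ η
  i_sub_a : ∀ ξ ∈ a, ∀ η ∈ a, ξ ≠ η → i ξ η ⊆ a
  star_cond : ∀ ξ ∈ a, ∀ η ∈ a, ξ ≠ η → ostar (h ξ) (h η) ⊆ (i ξ η).biUnion h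

/-- The order on `P_f`: `p ≤ q` iff `a^p ⊇ a^q`, `h^p(ξ) ∩ a^q = h^q(ξ)` for
`ξ ∈ a^q`, and `i^p` extends `i^q`. -/
def PfLe {f : Ordinal → Ordinal → Set Ordinal} (p q : PfCond f) : Prop :=
  q.a ⊆ p.a ∧ (∀ ξ ∈ q.a, p.h ξ ∩ q.a = q.h ξ) ∧
    ∀ ξ ∈ q.a, ∀ η ∈ q.a, ξ ≠ η → p.i ξ η = q.i ξ η

/-- Two finite subsets `x` and `y` of ω₂ are good for `f`. -/
def GoodFor (f : Ordinal → Ordinal → Set Ordinal) (x y : Finset Ordinal) : Prop :=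
  ∀ α ∈ x ∩ y, ∀ β ∈ x \ y, ∀ γ ∈ y \ x,
    ((α < β ∧ α < γ) → α ∈ f β γ) ∧
    (α < β → f α γ ⊆ f β γ) ∧
    (α < γ → f α β ⊆ f γ β)

/-- `p` and `p'` are good twins: the natural order preserving bijection between
`a^p` and `a^{p'}` is an isomorphism of the conditions fixing `a^p ∩ a^{p'}`,
`i` and `i'` agree on pairs from `a^p ∩ a^{p'}`, and `a^p`, `a^{p'}` are good
for `f`. -/
def GoodTwins {f : Ordinal → Ordinal → Set Ordinal} (p p' : PfCond f) : Prop :=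
  (∃ e : Ordinal → Ordinal,
    Set.BijOn e ↑p.a ↑p'.a ∧
    (∀ ξ ∈ p.a, ∀ η ∈ p.a, ξ < η → e ξ < e η) ∧
    (∀ ξ ∈ p.a ∩ p'.a, e ξ = ξ) ∧
    (∀ ξ ∈ p.a, p'.h (e ξ) = (p.h ξ).image e) ∧
    (∀ ξ ∈ p.a, ∀ η ∈ p.a, ξ ≠ η → p'.i (e ξ) (e η) = (p.i ξ η).image e)) ∧
  (∀ ξ ∈ p.a ∩ p'.a, ∀ η ∈ p.a ∩ p'.a, ξ ≠ η → p.i ξ η = p'.i ξ η) ∧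
  GoodFor f p.a p'.a

/-- `δ` is the ordinal `δ_η = min {δ ∈ a^p ∩ a^{p'} : η ∈ h^p(δ) ∪ h^{p'}(δ)}`. -/
def DeltaIs {f : Ordinal → Ordinal → Set Ordinal} (p p' : PfCond f)
    (η δ : Ordinal) : Prop :=
  δ ∈ p.a ∩ p'.a ∧ η ∈ p.h δ ∪ p'.h δ ∧
    ∀ δ' ∈ p.a ∩ p'.a, η ∈ p.h δ' ∪ p'.h δ' → δ ≤ δ'

/-- `f` is a Δ-function: every uncountable family of finite subsets of ω₂
contains two sets which are good for `f`. -/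
def IsDeltaFunction (f : Ordinal → Ordinal → Set Ordinal) : Prop :=
  ∀ F : Set (Finset Ordinal), (∀ x ∈ F, ∀ ξ ∈ x, ξ < omega2) → ¬ F.Countable →
    ∃ x ∈ F, ∃ y ∈ F, x ≠ y ∧ GoodFor f x y

section Uncountable

variable {ι κ X : Type*}

theorem exists_uncountable_fiber {β : Type*} {S : Set ι} (hS : ¬ S.Countable) (g : ι → β)
    {T : Set β} (hT : T.Countable) (hg : ∀ x ∈ S, g x ∈ T) :
    ∃ b ∈ T, ¬ {x ∈ S | g x = b}.Countable := by
  by_contra! hcon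
  refine hS ((hT.biUnion hcon).mono fun x hx => ?_)
  exact Set.mem_biUnion (hg x hx) ⟨hx, rfl⟩

/-- A maximal set of coordinates on which uncountably many members of a family agree. -/
theorem exists_maximal_root [Finite κ] {S : Set ι} (hS : ¬ S.Countable) (s : ι → κ → X) :
    ∃ J ⊆ S, ∃ K : Set κ, ¬ J.Countable ∧ (∀ p ∈ J, ∀ q ∈ J, ∀ k ∈ K, s p k = s q k) ∧
      ∀ m ∉ K, ∀ C : Set X, C.Countable → {p ∈ J | s p m ∈ C}.Countable := by
  let R : Set (Set κ) := {K | ∃ J ⊆ S, ¬ J.Countable ∧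
    ∀ p ∈ J, ∀ q ∈ J, ∀ k ∈ K, s p k = s q k}
  have hne : R.Nonempty := ⟨∅, S, subset_rfl, hS, by simp⟩
  obtain ⟨K, hK⟩ := R.toFinite.exists_maximal hne
  obtain ⟨J, hJS, hJ, hconst⟩ := hK.prop
  refine ⟨J, hJS, K, hJ, hconst, fun m hm C hC => ?_⟩
  by_contra hun
  obtain ⟨b, -, hb⟩ := exists_uncountable_fiber hun (fun p => s p m) hC fun p hp => hp.2
  have hins : insert m K ∈ R := by
    refine ⟨_, fun p hp => hJS hp.1.1, hb, fun p hp q hq k hk => ?_⟩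
    rcases Set.mem_insert_iff.1 hk with rfl | hk
    · exact hp.2.trans hq.2.symm
    · exact hconst p hp.1.1 q hq.1.1 k hk
  exact hm (hK.le_of_ge hins (Set.subset_insert m K) (Set.mem_insert m K))

theorem exists_uncountable_pairwise_disjoint [Finite κ] {J : Set ι} (hJ : ¬ J.Countable)
    (s : ι → κ → X) (K : Set κ)
    (hK : ∀ m ∉ K, ∀ C : Set X, C.Countable → {p ∈ J | s p m ∈ C}.Countable) :
    ∃ M ⊆ J, ¬ M.Countable ∧
      M.Pairwise fun p q => ∀ k ∉ K, ∀ l ∉ K, s p k ≠ s q l := by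
  let R : ι → ι → Prop := fun p q => ∀ k ∉ K, ∀ l ∉ K, s p k ≠ s q l
  obtain ⟨M, hM⟩ := zorn_subset {M : Set ι | M ⊆ J ∧ M.Pairwise R} fun c hc hchain =>
    ⟨⋃₀ c, ⟨Set.sUnion_subset fun t ht => (hc ht).1,
      (Set.pairwise_sUnion hchain.directedOn).2 fun t ht => (hc ht).2⟩,
      fun t ht => Set.subset_sUnion_of_mem ht⟩
  refine ⟨M, hM.prop.1, fun hcount => hJ ?_, hM.prop.2⟩
  let C : Set X := ⋃ p ∈ M, Set.range (s p)
  have hC : C.Countable := hcount.biUnion fun p _ => Set.countable_range _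
  have hbad : (⋃ m ∈ Kᶜ, {p ∈ J | s p m ∈ C}).Countable :=
    (Set.to_countable (Kᶜ)).biUnion fun m hm => hK m hm C hC
  refine (hcount.union hbad).mono fun p hp => ?_
  by_contra hnot
  rw [Set.mem_union, not_or] at hnot
  have hfresh : ∀ k ∉ K, s p k ∉ C := fun k hk hmem =>
    hnot.2 (Set.mem_biUnion (show k ∈ Kᶜ from hk) ⟨hp, hmem⟩)
  have hins : insert p M ∈ {M : Set ι | M ⊆ J ∧ M.Pairwise R} := by
    refine ⟨Set.insert_subset hp hM.prop.1, hM.prop.2.insert fun q hq _ => ⟨?_, ?_⟩⟩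
    · intro k hk l _ heq
      exact hfresh k hk (Set.mem_biUnion hq ⟨l, heq.symm⟩)
    · intro k _ l hl heq
      exact hfresh l hl (Set.mem_biUnion hq ⟨k, heq⟩)
  exact hnot.1 (hM.le_of_ge hins (Set.subset_insert p M) (Set.mem_insert p M))

end Uncountable

section Twins

variable {f : Ordinal → Ordinal → Set Ordinal}

/-- Conditions with the same pattern of `h` and `i`, agreeing on a set `K` of positions which
contains every common element and is closed under `i`, are good twins as soon as their
supports are good for `f`. -/
theorem goodTwins_of_enumerations {n : ℕ} {p q : PfCond f} (s t : Fin n ↪o Ordinal)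
    (hs : Set.range s = p.a) (ht : Set.range t = q.a)
    (hh : ∀ k l, s l ∈ p.h (s k) ↔ t l ∈ q.h (t k))
    (hi : ∀ k l m, s m ∈ p.i (s k) (s l) ↔ t m ∈ q.i (t k) (t l))
    (K : Set (Fin n)) (hK : ∀ k ∈ K, s k = t k)
    (hKi : ∀ k ∈ K, ∀ l ∈ K, k ≠ l → ∀ m, s m ∈ p.i (s k) (s l) → m ∈ K)
    (hdisj : ∀ k ∉ K, ∀ l ∉ K, s k ≠ t l) (hgood : GoodFor f p.a q.a) :
    GoodTwins p q := by
  have hsa : ∀ ξ, ξ ∈ p.a ↔ ∃ k, s k = ξ := fun ξ => by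
    rw [← Finset.mem_coe, ← hs, Set.mem_range]
  have hta : ∀ ξ, ξ ∈ q.a ↔ ∃ k, t k = ξ := fun ξ => by
    rw [← Finset.mem_coe, ← ht, Set.mem_range]
  have hcommon : ∀ ξ ∈ p.a ∩ q.a, ∃ k ∈ K, s k = ξ := by
    intro ξ hξ
    obtain ⟨hp, hq⟩ := Finset.mem_inter.1 hξ
    obtain ⟨k, rfl⟩ := (hsa ξ).1 hp
    obtain ⟨l, hl⟩ := (hta _).1 hq
    by_cases hk : k ∈ K
    · exact ⟨k, hk, rfl⟩
    · by_cases hlK : l ∈ K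
      · exact ⟨l, hlK, (hK l hlK).trans hl⟩
      · exact absurd hl.symm (hdisj k hk l hlK)
  let e : Ordinal → Ordinal := Function.extend s t id
  have he : ∀ k, e (s k) = t k := fun k => s.injective.extend_apply t id k
  refine ⟨⟨e, ⟨?_, ?_, ?_⟩, ?_, ?_, ?_, ?_⟩, ?_, hgood⟩
  · intro ξ hξ
    obtain ⟨k, rfl⟩ := (hsa ξ).1 hξ
    exact (hta _).2 ⟨k, (he k).symm⟩
  · intro ξ hξ η hη heq
    obtain ⟨k, rfl⟩ := (hsa ξ).1 hξ
    obtain ⟨l, rfl⟩ := (hsa η).1 hη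
    rw [he, he] at heq
    rw [t.injective heq]
  · intro ξ hξ
    obtain ⟨k, rfl⟩ := (hta ξ).1 hξ
    exact ⟨s k, (hsa _).2 ⟨k, rfl⟩, he k⟩
  · intro ξ hξ η hη hlt
    obtain ⟨k, rfl⟩ := (hsa ξ).1 hξ
    obtain ⟨l, rfl⟩ := (hsa η).1 hη
    rw [he, he]
    exact t.strictMono (s.lt_iff_lt.1 hlt)
  · intro ξ hξ
    obtain ⟨k, hk, rfl⟩ := hcommon ξ hξ
    rw [he, hK k hk]
  · intro ξ hξ
    obtain ⟨k, rfl⟩ := (hsa ξ).1 hξ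
    rw [he]
    ext ζ
    rw [Finset.mem_image]
    constructor
    · intro hζ
      obtain ⟨l, rfl⟩ := (hta ζ).1 (q.h_sub _ ((hta _).2 ⟨k, rfl⟩) hζ)
      exact ⟨s l, (hh k l).2 hζ, he l⟩
    · rintro ⟨x, hx, rfl⟩
      obtain ⟨l, rfl⟩ := (hsa x).1 (p.h_sub _ hξ hx)
      rw [he]
      exact (hh k l).1 hx
  · intro ξ hξ η hη hne
    obtain ⟨k, rfl⟩ := (hsa ξ).1 hξ
    obtain ⟨l, rfl⟩ := (hsa η).1 hη
    have hkl : t k ≠ t l := fun h => hne (by rw [t.injective h])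
    rw [he, he]
    ext ζ
    rw [Finset.mem_image]
    constructor
    · intro hζ
      obtain ⟨m, rfl⟩ := (hta ζ).1
        (q.i_sub_a _ ((hta _).2 ⟨k, rfl⟩) _ ((hta _).2 ⟨l, rfl⟩) hkl hζ)
      exact ⟨s m, (hi k l m).2 hζ, he m⟩
    · rintro ⟨x, hx, rfl⟩
      obtain ⟨m, rfl⟩ := (hsa x).1 (p.i_sub_a _ hξ _ hη hne hx)
      rw [he]
      exact (hi k l m).1 hx
  · intro ξ hξ η hη hne
    obtain ⟨k, hk, rfl⟩ := hcommon ξ hξ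
    obtain ⟨l, hl, rfl⟩ := hcommon η hη
    have hkl : k ≠ l := fun h => hne (by rw [h])
    ext ζ
    constructor
    · intro hζ
      obtain ⟨m, rfl⟩ := (hsa ζ).1
        (p.i_sub_a _ (Finset.mem_inter.1 hξ).1 _ (Finset.mem_inter.1 hη).1 hne hζ)
      have hm := (hi k l m).1 hζ
      rwa [← hK k hk, ← hK l hl, ← hK m (hKi k hk l hl hkl m hζ)] at hm
    · intro hζ
      obtain ⟨m, rfl⟩ := (hta ζ).1
        (q.i_sub_a _ (Finset.mem_inter.1 hξ).2 _ (Finset.mem_inter.1 hη).2 hne hζ)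
      rw [hK k hk, hK l hl] at hζ
      have hm := (hi k l m).2 hζ
      rwa [← hK m (hKi k hk l hl hkl m hm)]

theorem GoodFor.of_eq {x y : Finset Ordinal} (h : x = y) : GoodFor f x y := by
  subst h
  intro α _ β hβ
  simp at hβ

theorem exists_goodTwins (hcount : ∀ α β, (f α β).Countable) (hΔ : IsDeltaFunction f)
    {F : Set (PfCond f)} (hF : ¬ F.Countable) :
    ∃ p ∈ F, ∃ q ∈ F, p ≠ q ∧ GoodTwins p q := by
  obtain ⟨n, -, hn⟩ := exists_uncountable_fiber hF (fun p => p.a.card) Set.countable_univ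
    fun _ _ => Set.mem_univ _
  let I := {p : PfCond f // p ∈ F ∧ p.a.card = n}
  let s : I → Fin n ↪o Ordinal := fun p => p.1.a.orderEmbOfFin p.2.2
  have hsr : ∀ p : I, Set.range (s p) = p.1.a := fun p => Finset.range_orderEmbOfFin _ _
  have hsm : ∀ (p : I) k, s p k ∈ p.1.a := fun p k => Finset.orderEmbOfFin_mem _ _ _
  have hI : ¬ (Set.univ : Set I).Countable := by
    rw [Set.countable_univ_iff]
    exact fun h => hn (Set.countable_coe_iff.1 h)
  let pattern : I → (Fin n → Fin n → Prop) × (Fin n → Fin n → Fin n → Prop) := fun p =>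
    (fun k l => s p l ∈ p.1.h (s p k), fun k l m => s p m ∈ p.1.i (s p k) (s p l))
  obtain ⟨c, -, hS⟩ := exists_uncountable_fiber hI pattern (Set.to_countable Set.univ)
    fun _ _ => Set.mem_univ _
  obtain ⟨J, hJS, K, hJ, hconst, hK⟩ := exists_maximal_root hS fun p => (s p : Fin n → Ordinal)
  obtain ⟨M, hMJ, hM, hdisj⟩ := exists_uncountable_pairwise_disjoint hJ _ K hK
  have hpattern : ∀ p ∈ J, ∀ q ∈ J, pattern p = pattern q := fun p hp q hq =>
    (hJS hp).2.trans (hJS hq).2.symm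
  have hKi : ∀ p ∈ J, ∀ k ∈ K, ∀ l ∈ K, k ≠ l → ∀ m, s p m ∈ p.1.i (s p k) (s p l) →
      m ∈ K := by
    intro p hp k hk l hl hkl m hm
    by_contra hmK
    refine hJ ((hK m hmK _ (hcount (s p k) (s p l))).mono fun q hq => ?_)
    refine ⟨hq, ?_⟩
    have hpat : (s p m ∈ p.1.i (s p k) (s p l)) = (s q m ∈ q.1.i (s q k) (s q l)) :=
      congrFun (congrFun (congrFun (congrArg Prod.snd (hpattern p hp q hq)) k) l) m
    rw [hpat] at hm
    have hmem := q.1.i_sub_f _ (hsm q k) _ (hsm q l) (fun h => hkl ((s q).injective h)) _ hm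
    rwa [hconst q hq p hp k hk, hconst q hq p hp l hl] at hmem
  obtain ⟨p, hp, q, hq, hpq, hgood⟩ :
      ∃ p ∈ M, ∃ q ∈ M, p ≠ q ∧ GoodFor f p.1.a q.1.a := by
    by_cases hinj : Set.InjOn (fun p : I => p.1.a) M
    · obtain ⟨_, ⟨p, hp, rfl⟩, _, ⟨q, hq, rfl⟩, hne, hg⟩ :=
        hΔ ((fun p : I => p.1.a) '' M) (by rintro _ ⟨p, -, rfl⟩; exact p.1.a_lt)
          fun h => hM (Set.countable_of_injective_of_countable_image hinj h)
      exact ⟨p, hp, q, hq, fun h => hne (by rw [h]), hg⟩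
    · simp only [Set.InjOn, not_forall] at hinj
      obtain ⟨p, hp, q, hq, heq, hne⟩ := hinj
      exact ⟨p, hp, q, hq, hne, .of_eq heq⟩
  have hpat := hpattern p (hMJ hp) q (hMJ hq)
  refine ⟨p.1, p.2.1, q.1, q.2.1, fun h => hpq (Subtype.ext h),
    goodTwins_of_enumerations (s p) (s q) (hsr p) (hsr q) (fun k l => ?_) (fun k l m => ?_) K
      (hconst p (hMJ hp) q (hMJ hq)) (hKi p (hMJ hp)) (hdisj hp hq hpq) hgood⟩
  · exact iff_of_eq (congrFun (congrFun (congrArg Prod.fst hpat) k) l)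
  · exact iff_of_eq (congrFun (congrFun (congrFun (congrArg Prod.snd hpat) k) l) m)

end Twins

section Star

theorem exists_mem_eq_max {x y : Finset Ordinal} {ξ : Ordinal} (hξ : ξ ∈ x)
    (hle : ∀ η ∈ x, η ≤ ξ) : (∃ m ∈ y, x.max = (m : WithBot Ordinal)) ↔ ξ ∈ y := by
  have hmax : x.max = (ξ : WithBot Ordinal) :=
    le_antisymm (Finset.max_le fun η hη => WithBot.coe_le_coe.2 (hle η hη)) (Finset.le_max hξ)
  simp [hmax]

theorem mem_ostar {x y : Finset Ordinal} {ξ η ζ : Ordinal} (hξ : ξ ∈ x)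
    (hξle : ∀ ζ ∈ x, ζ ≤ ξ) (hη : η ∈ y) (hηle : ∀ ζ ∈ y, ζ ≤ η) :
    ζ ∈ ostar x y ↔ (ξ ∈ y ∧ ζ ∈ x ∧ ζ ∉ y) ∨ (ξ ∉ y ∧ η ∈ x ∧ ζ ∈ y ∧ ζ ∉ x) ∨
      (ξ ∉ y ∧ η ∉ x ∧ ζ ∈ x ∧ ζ ∈ y) := by
  simp only [ostar, exists_mem_eq_max hξ hξle, exists_mem_eq_max hη hηle]
  split_ifs <;> simp_all

variable {f : Ordinal → Ordinal → Set Ordinal} (p : PfCond f) {ξ η ζ : Ordinal}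

theorem PfCond.exists_of_mem_inter (hξ : ξ ∈ p.a) (hη : η ∈ p.a) (hne : ξ ≠ η)
    (h₁ : ξ ∉ p.h η) (h₂ : η ∉ p.h ξ) (hζξ : ζ ∈ p.h ξ) (hζη : ζ ∈ p.h η) :
    ∃ ν ∈ p.i ξ η, ζ ∈ p.h ν :=
  Finset.mem_biUnion.1 (p.star_cond ξ hξ η hη hne
    ((mem_ostar (p.h_mem ξ hξ) (p.h_le ξ hξ) (p.h_mem η hη) (p.h_le η hη)).2
      (.inr (.inr ⟨h₁, h₂, hζξ, hζη⟩))))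

theorem PfCond.exists_of_mem_sdiff (hξ : ξ ∈ p.a) (hη : η ∈ p.a) (hne : ξ ≠ η)
    (h₁ : ξ ∈ p.h η) (hζξ : ζ ∈ p.h ξ) (hζη : ζ ∉ p.h η) :
    ∃ ν ∈ p.i ξ η, ζ ∈ p.h ν :=
  Finset.mem_biUnion.1 (p.star_cond ξ hξ η hη hne
    ((mem_ostar (p.h_mem ξ hξ) (p.h_le ξ hξ) (p.h_mem η hη) (p.h_le η hη)).2
      (.inl ⟨h₁, hζξ, hζη⟩)))

end Star

section Amalgamation

variable {f : Ordinal → Ordinal → Set Ordinal}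

/-- The part of being good twins that the amalgamation uses, in a symmetric form. -/
structure Coherent (p q : PfCond f) : Prop where
  h_iff : ∀ ξ ∈ p.a, ξ ∈ q.a → ∀ ζ ∈ p.a, ζ ∈ q.a → (ζ ∈ p.h ξ ↔ ζ ∈ q.h ξ)
  i_eq : ∀ ξ ∈ p.a, ξ ∈ q.a → ∀ η ∈ p.a, η ∈ q.a → ξ ≠ η → p.i ξ η = q.i ξ η
  mem_f : ∀ α ∈ p.a, α ∈ q.a → ∀ β ∈ p.a, β ∉ q.a → ∀ γ ∈ q.a, γ ∉ p.a →
    α < β → α < γ → α ∈ f β γ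
  f_sub_left : ∀ α ∈ p.a, α ∈ q.a → ∀ β ∈ p.a, β ∉ q.a → ∀ γ ∈ q.a, γ ∉ p.a →
    α < β → f α γ ⊆ f β γ
  f_sub_right : ∀ α ∈ p.a, α ∈ q.a → ∀ β ∈ p.a, β ∉ q.a → ∀ γ ∈ q.a, γ ∉ p.a →
    α < γ → f β α ⊆ f β γ

variable {p q : PfCond f} {ξ η ζ δ : Ordinal}

theorem GoodTwins.coherent (hsymm : ∀ α β, f α β = f β α) (h : GoodTwins p q) :
    Coherent p q := by
  obtain ⟨⟨e, hbij, -, hfix, hh, -⟩, hi, hgood⟩ := h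
  refine ⟨fun ξ hp hq ζ hζp hζq => ?_, fun ξ hp hq η hηp hηq => ?_,
    fun α hp hq β hβp hβq γ hγq hγp h₁ h₂ => ?_, fun α hp hq β hβp hβq γ hγq hγp h₁ => ?_,
    fun α hp hq β hβp hβq γ hγq hγp h₁ => ?_⟩
  · have hξ := hh ξ hp
    rw [hfix ξ (Finset.mem_inter.2 ⟨hp, hq⟩)] at hξ
    have hζ := hfix ζ (Finset.mem_inter.2 ⟨hζp, hζq⟩)
    rw [hξ, Finset.mem_image]
    refine ⟨fun h => ⟨ζ, h, hζ⟩, ?_⟩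
    rintro ⟨x, hx, hxζ⟩
    rwa [← hbij.injOn (p.h_sub ξ hp hx) hζp (hxζ.trans hζ.symm)]
  · exact hi ξ (Finset.mem_inter.2 ⟨hp, hq⟩) η (Finset.mem_inter.2 ⟨hηp, hηq⟩)
  all_goals
    have hg := hgood α (Finset.mem_inter.2 ⟨hp, hq⟩) β (Finset.mem_sdiff.2 ⟨hβp, hβq⟩) γ
      (Finset.mem_sdiff.2 ⟨hγq, hγp⟩)
  · exact hg.1 ⟨h₁, h₂⟩
  · exact hg.2.1 h₁
  · rw [hsymm β α, hsymm β γ]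
    exact hg.2.2 h₁

theorem Coherent.symm (hsymm : ∀ α β, f α β = f β α) (h : Coherent p q) : Coherent q p where
  h_iff ξ hq hp ζ hζq hζp := (h.h_iff ξ hp hq ζ hζp hζq).symm
  i_eq ξ hq hp η hηq hηp hne := (h.i_eq ξ hp hq η hηp hηq hne).symm
  mem_f α hq hp β hβq hβp γ hγp hγq h₁ h₂ := by
    rw [hsymm]; exact h.mem_f α hp hq γ hγp hγq β hβq hβp h₂ h₁
  f_sub_left α hq hp β hβq hβp γ hγp hγq h₁ := by
    rw [hsymm α γ, hsymm β γ]; exact h.f_sub_right α hp hq γ hγp hγq β hβq hβp h₁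
  f_sub_right α hq hp β hβq hβp γ hγp hγq h₁ := by
    rw [hsymm β α, hsymm β γ]; exact h.f_sub_left α hp hq γ hγp hγq β hβq hβp h₁

theorem DeltaIs.symm (h : DeltaIs p q ζ δ) : DeltaIs q p ζ δ := by
  rw [DeltaIs, Finset.inter_comm, Finset.union_comm]
  refine ⟨h.1, h.2.1, fun δ' hδ' hζ => h.2.2 δ' hδ' ?_⟩
  rwa [Finset.union_comm]

theorem deltaIs_comm : DeltaIs p q ζ δ ↔ DeltaIs q p ζ δ := ⟨.symm, .symm⟩

theorem DeltaIs.mem_left (h : DeltaIs p q ζ δ) : δ ∈ p.a := (Finset.mem_inter.1 h.1).1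

theorem DeltaIs.mem_right (h : DeltaIs p q ζ δ) : δ ∈ q.a := (Finset.mem_inter.1 h.1).2

theorem DeltaIs.mem_h (h : DeltaIs p q ζ δ) (hζ : ζ ∉ q.a) : ζ ∈ p.h δ :=
  (Finset.mem_union.1 h.2.1).resolve_right fun hq => hζ (q.h_sub δ h.mem_right hq)

theorem DeltaIs.le_of_mem (h : DeltaIs p q ζ δ) (hξp : ξ ∈ p.a) (hξq : ξ ∈ q.a)
    (hζ : ζ ∈ p.h ξ) : δ ≤ ξ :=
  h.2.2 ξ (Finset.mem_inter.2 ⟨hξp, hξq⟩) (Finset.mem_union_left _ hζ)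

theorem DeltaIs.unique {δ' : Ordinal} (h : DeltaIs p q ζ δ) (h' : DeltaIs p q ζ δ') : δ = δ' :=
  le_antisymm (h.2.2 _ h'.1 h'.2.1) (h'.2.2 _ h.1 h.2.1)

theorem exists_deltaIs (hξp : ξ ∈ p.a) (hξq : ξ ∈ q.a) (hζ : ζ ∈ p.h ξ) :
    ∃ δ, DeltaIs p q ζ δ := by
  let D := (p.a ∩ q.a).filter fun δ => ζ ∈ p.h δ ∪ q.h δ
  have hne : D.Nonempty := ⟨ξ, Finset.mem_filter.2
    ⟨Finset.mem_inter.2 ⟨hξp, hξq⟩, Finset.mem_union_left _ hζ⟩⟩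
  have hmin := Finset.mem_filter.1 (D.min'_mem hne)
  exact ⟨D.min' hne, hmin.1, hmin.2, fun ε hε hζε =>
    D.min'_le ε (Finset.mem_filter.2 ⟨hε, hζε⟩)⟩

/-- For `ξ` in the root, an element `ζ` outside `q` lies in `h ξ` iff `δ_ζ` does. -/
theorem Coherent.mem_h_iff_delta (hlt : ∀ α β γ, γ ∈ f α β → γ < α ∧ γ < β)
    (hc : Coherent p q) (hξp : ξ ∈ p.a) (hξq : ξ ∈ q.a) (hζ : ζ ∉ q.a) :
    ζ ∈ p.h ξ ↔ ∃ δ, DeltaIs p q ζ δ ∧ δ ∈ p.h ξ := by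
  have key : ∀ δ, DeltaIs p q ζ δ → δ ≠ ξ → ¬ ∃ ν ∈ p.i δ ξ, ζ ∈ p.h ν := by
    rintro δ hδ hne ⟨ν, hν, hζν⟩
    have hνp := p.i_sub_a δ hδ.mem_left ξ hξp hne hν
    have hνlt := (hlt _ _ _ (p.i_sub_f δ hδ.mem_left ξ hξp hne ν hν)).1
    rw [hc.i_eq δ hδ.mem_left hδ.mem_right ξ hξp hξq hne] at hν
    have hνq := q.i_sub_a δ hδ.mem_right ξ hξq hne hν
    exact absurd (hδ.le_of_mem hνp hνq hζν) (not_le.2 hνlt)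
  constructor
  · intro h
    obtain ⟨δ, hδ⟩ := exists_deltaIs hξp hξq h
    refine ⟨δ, hδ, ?_⟩
    by_contra hnot
    have hne : δ ≠ ξ := fun h => hnot (h ▸ p.h_mem ξ hξp)
    have hle := hδ.le_of_mem hξp hξq h
    exact key δ hδ hne (p.exists_of_mem_inter hδ.mem_left hξp hne hnot
      (fun h => hne (le_antisymm hle (p.h_le δ hδ.mem_left ξ h))) (hδ.mem_h hζ) h)
  · rintro ⟨δ, hδ, hmem⟩
    by_contra hnot
    have hne : δ ≠ ξ := fun h => hnot (h ▸ hδ.mem_h hζ)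
    exact key δ hδ hne
      (p.exists_of_mem_sdiff hδ.mem_left hξp hne hmem (hδ.mem_h hζ) hnot)

/-- `H` extends `h` of the condition `p`, and it contains an element `ζ` of `q` outside `p`
exactly where `h` contains `δ_ζ`. -/
structure IsAmalgam (p q : PfCond f) (H : Ordinal → Finset Ordinal) : Prop where
  mem_iff : ∀ ξ ∈ p.a, ∀ ζ ∈ p.a, (ζ ∈ H ξ ↔ ζ ∈ p.h ξ)
  mem_iff_delta : ∀ ξ ∈ p.a, ∀ ζ ∈ q.a, ζ ∉ p.a →
    (ζ ∈ H ξ ↔ ∃ δ, DeltaIs p q ζ δ ∧ δ ∈ p.h ξ)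
  sub : ∀ ξ ∈ p.a, H ξ ⊆ p.a ∪ q.a

variable {H : Ordinal → Finset Ordinal}

theorem IsAmalgam.self_mem (hH : IsAmalgam p q H) (hξ : ξ ∈ p.a) : ξ ∈ H ξ :=
  (hH.mem_iff ξ hξ ξ hξ).2 (p.h_mem ξ hξ)

theorem IsAmalgam.le_of_mem (hH : IsAmalgam p q H) (hξ : ξ ∈ p.a) (hζ : ζ ∈ H ξ) : ζ ≤ ξ := by
  by_cases hζp : ζ ∈ p.a
  · exact p.h_le ξ hξ ζ ((hH.mem_iff ξ hξ ζ hζp).1 hζ)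
  · have hζq := (Finset.mem_union.1 (hH.sub ξ hξ hζ)).resolve_left hζp
    obtain ⟨δ, hδ, hmem⟩ := (hH.mem_iff_delta ξ hξ ζ hζq hζp).1 hζ
    exact (q.h_le δ hδ.mem_right ζ (hδ.symm.mem_h hζp)).trans (p.h_le ξ hξ δ hmem)

theorem IsAmalgam.exists_of_mem_ostar (hH : IsAmalgam p q H) (hξ : ξ ∈ p.a) (hη : η ∈ p.a)
    (hne : ξ ≠ η) (hζ : ζ ∈ ostar (H ξ) (H η)) : ∃ ν ∈ p.i ξ η, ζ ∈ H ν := by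
  rw [mem_ostar (hH.self_mem hξ) (fun _ => hH.le_of_mem hξ) (hH.self_mem hη)
    (fun _ => hH.le_of_mem hη), hH.mem_iff η hη ξ hξ, hH.mem_iff ξ hξ η hη] at hζ
  have hor : ζ ∈ H ξ ∨ ζ ∈ H η := by tauto
  have hunion : ζ ∈ p.a ∪ q.a := hor.elim (fun h => hH.sub ξ hξ h) fun h => hH.sub η hη h
  have hstar : ∀ {x}, (ξ ∈ p.h η ∧ x ∈ p.h ξ ∧ x ∉ p.h η) ∨
      (ξ ∉ p.h η ∧ η ∈ p.h ξ ∧ x ∈ p.h η ∧ x ∉ p.h ξ) ∨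
      (ξ ∉ p.h η ∧ η ∉ p.h ξ ∧ x ∈ p.h ξ ∧ x ∈ p.h η) → ∃ ν ∈ p.i ξ η, x ∈ p.h ν := by
    intro x hx
    exact Finset.mem_biUnion.1 (p.star_cond ξ hξ η hη hne
      ((mem_ostar (p.h_mem ξ hξ) (p.h_le ξ hξ) (p.h_mem η hη) (p.h_le η hη)).2 hx))
  by_cases hζp : ζ ∈ p.a
  · rw [hH.mem_iff ξ hξ ζ hζp, hH.mem_iff η hη ζ hζp] at hζ
    obtain ⟨ν, hν, hmem⟩ := hstar hζ
    exact ⟨ν, hν, (hH.mem_iff ν (p.i_sub_a ξ hξ η hη hne hν) ζ hζp).2 hmem⟩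
  · have hζq := (Finset.mem_union.1 hunion).resolve_left hζp
    have hdelta := fun ξ hξ => hH.mem_iff_delta ξ hξ ζ hζq hζp
    obtain ⟨δ, hδ⟩ : ∃ δ, DeltaIs p q ζ δ := by
      rw [hdelta ξ hξ, hdelta η hη] at hor
      exact hor.elim (fun h => h.imp fun _ => And.left) fun h => h.imp fun _ => And.left
    have hiff : ∀ ξ ∈ p.a, (ζ ∈ H ξ ↔ δ ∈ p.h ξ) := fun ξ hξ => by
      rw [hdelta ξ hξ]
      exact ⟨fun ⟨δ', hδ', hmem⟩ => hδ.unique hδ' ▸ hmem, fun h => ⟨δ, hδ, h⟩⟩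
    rw [hiff ξ hξ, hiff η hη] at hζ
    obtain ⟨ν, hν, hmem⟩ := hstar hζ
    exact ⟨ν, hν, (hiff ν (p.i_sub_a ξ hξ η hη hne hν)).2 hmem⟩

/-- An element `ζ` with `δ_ζ` below both members of a mixed pair is covered by `H δ_ζ`. -/
theorem Coherent.exists_of_delta_lt (hc : Coherent p q) (hp : IsAmalgam p q H)
    (hq : IsAmalgam q p H) (hξp : ξ ∈ p.a) (hξq : ξ ∉ q.a) (hηq : η ∈ q.a) (hηp : η ∉ p.a)
    (hδ : DeltaIs p q ζ δ) (hδξ : δ < ξ) (hδη : δ < η) :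
    ∃ ν ∈ p.a ∪ q.a, ν ∈ f ξ η ∧ ζ ∈ H ν := by
  refine ⟨δ, Finset.mem_union_left _ hδ.mem_left,
    hc.mem_f δ hδ.mem_left hδ.mem_right ξ hξp hξq η hηq hηp hδξ hδη, ?_⟩
  rcases Finset.mem_union.1 hδ.2.1 with h | h
  · exact (hp.mem_iff δ hδ.mem_left ζ (p.h_sub δ hδ.mem_left h)).2 h
  · exact (hq.mem_iff δ hδ.mem_right ζ (q.h_sub δ hδ.mem_right h)).2 h

theorem Coherent.exists_of_mem_i (hc : Coherent p q) (hp : IsAmalgam p q H) (hξp : ξ ∈ p.a)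
    (hξq : ξ ∉ q.a) (hηq : η ∈ q.a) (hηp : η ∉ p.a) (hδp : δ ∈ p.a) (hδq : δ ∈ q.a)
    (hδη : δ < η) (hζ : ζ ∈ p.a) (h : ∃ ν ∈ p.i ξ δ, ζ ∈ p.h ν) :
    ∃ ν ∈ p.a ∪ q.a, ν ∈ f ξ η ∧ ζ ∈ H ν := by
  obtain ⟨ν, hν, hmem⟩ := h
  have hne : ξ ≠ δ := fun h => hξq (h ▸ hδq)
  have hνp := p.i_sub_a ξ hξp δ hδp hne hν
  exact ⟨ν, Finset.mem_union_left _ hνp, hc.f_sub_right δ hδp hδq ξ hξp hξq η hηq hηp hδη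
    (p.i_sub_f ξ hξp δ hδp hne ν hν), (hp.mem_iff ν hνp ζ hζ).2 hmem⟩

/-- An element of the root lying below both members of a mixed pair is covered by itself. -/
theorem Coherent.exists_of_mem_root (hc : Coherent p q) (hp : IsAmalgam p q H)
    (hξp : ξ ∈ p.a) (hξq : ξ ∉ q.a) (hηq : η ∈ q.a) (hηp : η ∉ p.a) (hζp : ζ ∈ p.a)
    (hζq : ζ ∈ q.a) (hζξ : ζ ≤ ξ) (hζη : ζ ≤ η) :
    ∃ ν ∈ p.a ∪ q.a, ν ∈ f ξ η ∧ ζ ∈ H ν :=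
  ⟨ζ, Finset.mem_union_left _ hζp, hc.mem_f ζ hζp hζq ξ hξp hξq η hηq hηp
    (lt_of_le_of_ne hζξ fun h => hξq (h ▸ hζq)) (lt_of_le_of_ne hζη fun h => hηp (h ▸ hζp)),
    hp.self_mem hζp⟩

theorem Coherent.exists_of_mem_sdiff (hc : Coherent p q) (hp : IsAmalgam p q H)
    (hq : IsAmalgam q p H) (hξp : ξ ∈ p.a) (hξq : ξ ∉ q.a) (hηq : η ∈ q.a) (hηp : η ∉ p.a)
    (hξη : ξ ∈ H η) (hζξ : ζ ∈ H ξ) (hζη : ζ ∉ H η) :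
    ∃ ν ∈ p.a ∪ q.a, ν ∈ f ξ η ∧ ζ ∈ H ν := by
  have hξleη := hq.le_of_mem hηq hξη
  have hξltη : ξ < η := lt_of_le_of_ne hξleη fun h => hηp (h ▸ hξp)
  have hζleξ := hp.le_of_mem hξp hζξ
  obtain ⟨δ, hδ', hδη⟩ := (hq.mem_iff_delta η hηq ξ hξp hξq).1 hξη
  have hδ := hδ'.symm
  have hδlt : δ < η := lt_of_le_of_ne (q.h_le η hηq δ hδη) fun h => hηp (h ▸ hδ.mem_left)
  by_cases hζp : ζ ∈ p.a
  · by_cases hζq : ζ ∈ q.a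
    · exact hc.exists_of_mem_root hp hξp hξq hηq hηp hζp hζq hζleξ (hζleξ.trans hξleη)
    have hζh := (hp.mem_iff ξ hξp ζ hζp).1 hζξ
    have hneδ : ξ ≠ δ := fun h => hξq (h ▸ hδ.mem_right)
    by_cases hζδ : ζ ∈ p.h δ
    · obtain ⟨ε, hε⟩ := exists_deltaIs hδ.mem_left hδ.mem_right hζδ
      have hεne : ε ≠ δ := fun h =>
        hζη ((hq.mem_iff_delta η hηq ζ hζp hζq).2 ⟨ε, hε.symm, h ▸ hδη⟩)
      have hεδ : ε < δ :=
        lt_of_le_of_ne (hε.le_of_mem hδ.mem_left hδ.mem_right hζδ) hεne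
      have hεη := hεδ.trans hδlt
      rcases lt_or_ge ε ξ with hεξ | hξε
      · exact hc.exists_of_delta_lt hp hq hξp hξq hηq hηp hε hεξ hεη
      have hneε : ξ ≠ ε := fun h => hξq (h ▸ hε.mem_right)
      exact hc.exists_of_mem_i hp hξp hξq hηq hηp hε.mem_left hε.mem_right hεη hζp
        (p.exists_of_mem_inter hξp hε.mem_left hneε
          (fun h => not_le.2 hεδ (hδ.le_of_mem hε.mem_left hε.mem_right h))
          (fun h => hneε (le_antisymm hξε (p.h_le ξ hξp ε h))) hζh (hε.mem_h hζq))
    · exact hc.exists_of_mem_i hp hξp hξq hηq hηp hδ.mem_left hδ.mem_right hδlt hζp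
        (p.exists_of_mem_sdiff hξp hδ.mem_left hneδ (hδ.mem_h hξq) hζh hζδ)
  · have hζq := (Finset.mem_union.1 (hp.sub ξ hξp hζξ)).resolve_left hζp
    obtain ⟨ε, hε, hεξ⟩ := (hp.mem_iff_delta ξ hξp ζ hζq hζp).1 hζξ
    have hεlt : ε < ξ := lt_of_le_of_ne (p.h_le ξ hξp ε hεξ) fun h => hξq (h ▸ hε.mem_right)
    exact hc.exists_of_delta_lt hp hq hξp hξq hηq hηp hε hεlt (hεlt.trans hξltη)

theorem Coherent.exists_of_mem_inter_of_notMem (hc : Coherent p q) (hp : IsAmalgam p q H)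
    (hq : IsAmalgam q p H) (hξp : ξ ∈ p.a) (hξq : ξ ∉ q.a) (hηq : η ∈ q.a) (hηp : η ∉ p.a)
    (hξη : ξ ∉ H η) (hζξ : ζ ∈ H ξ) (hζη : ζ ∈ H η) (hζp : ζ ∈ p.a) (hζq : ζ ∉ q.a) :
    ∃ ν ∈ p.a ∪ q.a, ν ∈ f ξ η ∧ ζ ∈ H ν := by
  have hζh := (hp.mem_iff ξ hξp ζ hζp).1 hζξ
  obtain ⟨ε, hε', hεη⟩ := (hq.mem_iff_delta η hηq ζ hζp hζq).1 hζη
  have hε := hε'.symm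
  have hεlt : ε < η := lt_of_le_of_ne (q.h_le η hηq ε hεη) fun h => hηp (h ▸ hε.mem_left)
  rcases lt_or_ge ε ξ with hεξ | hξε
  · exact hc.exists_of_delta_lt hp hq hξp hξq hηq hηp hε hεξ hεlt
  have hneε : ξ ≠ ε := fun h => hξq (h ▸ hε.mem_right)
  by_cases hξhε : ξ ∈ p.h ε
  · obtain ⟨δ, hδ⟩ := exists_deltaIs hε.mem_left hε.mem_right hξhε
    have hδne : δ ≠ ε := fun h =>
      hξη ((hq.mem_iff_delta η hηq ξ hξp hξq).2 ⟨δ, hδ.symm, h ▸ hεη⟩)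
    have hδε : δ < ε := lt_of_le_of_ne (hδ.le_of_mem hε.mem_left hε.mem_right hξhε) hδne
    have hneδ : ξ ≠ δ := fun h => hξq (h ▸ hδ.mem_right)
    exact hc.exists_of_mem_i hp hξp hξq hηq hηp hδ.mem_left hδ.mem_right (hδε.trans hεlt) hζp
      (p.exists_of_mem_sdiff hξp hδ.mem_left hneδ (hδ.mem_h hξq) hζh
        fun h => not_le.2 hδε (hε.le_of_mem hδ.mem_left hδ.mem_right h))
  · exact hc.exists_of_mem_i hp hξp hξq hηq hηp hε.mem_left hε.mem_right hεlt hζp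
      (p.exists_of_mem_inter hξp hε.mem_left hneε hξhε
        (fun h => hneε (le_antisymm hξε (p.h_le ξ hξp ε h))) hζh (hε.mem_h hζq))

/-- The star condition of the amalgamation for mixed pairs. -/
theorem Coherent.exists_of_mem_ostar (hsymm : ∀ α β, f α β = f β α) (hc : Coherent p q)
    (hp : IsAmalgam p q H) (hq : IsAmalgam q p H) (hξp : ξ ∈ p.a) (hξq : ξ ∉ q.a)
    (hηq : η ∈ q.a) (hηp : η ∉ p.a) (hζ : ζ ∈ ostar (H ξ) (H η)) :
    ∃ ν ∈ p.a ∪ q.a, ν ∈ f ξ η ∧ ζ ∈ H ν := by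
  have hswap : (∃ ν ∈ q.a ∪ p.a, ν ∈ f η ξ ∧ ζ ∈ H ν) →
      ∃ ν ∈ p.a ∪ q.a, ν ∈ f ξ η ∧ ζ ∈ H ν := by
    rw [Finset.union_comm, hsymm η ξ]; exact id
  rw [mem_ostar (hp.self_mem hξp) (fun _ => hp.le_of_mem hξp) (hq.self_mem hηq)
    (fun _ => hq.le_of_mem hηq)] at hζ
  rcases hζ with ⟨h₁, h₂, h₃⟩ | ⟨-, h₁, h₂, h₃⟩ | ⟨h₁, h₂, h₃, h₄⟩
  · exact hc.exists_of_mem_sdiff hp hq hξp hξq hηq hηp h₁ h₂ h₃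
  · exact hswap ((hc.symm hsymm).exists_of_mem_sdiff hq hp hηq hηp hξp hξq h₁ h₂ h₃)
  · by_cases hζp : ζ ∈ p.a
    · by_cases hζq : ζ ∈ q.a
      · exact hc.exists_of_mem_root hp hξp hξq hηq hηp hζp hζq (hp.le_of_mem hξp h₃)
          (hq.le_of_mem hηq h₄)
      · exact hc.exists_of_mem_inter_of_notMem hp hq hξp hξq hηq hηp h₁ h₃ h₄ hζp hζq
    · have hζq := (Finset.mem_union.1 (hp.sub ξ hξp h₃)).resolve_left hζp
      exact hswap ((hc.symm hsymm).exists_of_mem_inter_of_notMem hq hp hηq hηp hξp hξq h₂ h₄ h₃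
        hζq hζp)

/-- The extension of `h ξ`, for `ξ` in `p`, by the elements `ζ` of `q` with `δ_ζ ∈ h ξ`. -/
def extendH (p q : PfCond f) (ξ : Ordinal) : Finset Ordinal :=
  p.h ξ ∪ (q.a \ p.a).filter fun ζ => ∃ δ, DeltaIs p q ζ δ ∧ δ ∈ p.h ξ

theorem isAmalgam_of_eq_extendH (hH : ∀ ξ ∈ p.a, H ξ = extendH p q ξ) : IsAmalgam p q H where
  mem_iff ξ hξ ζ hζ := by simp [hH ξ hξ, extendH, hζ]
  mem_iff_delta ξ hξ ζ hζq hζp := by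
    have hnot : ζ ∉ p.h ξ := fun h => hζp (p.h_sub ξ hξ h)
    simp [hH ξ hξ, extendH, hζq, hζp, hnot]
  sub ξ hξ := by
    rw [hH ξ hξ]
    exact Finset.union_subset_union (p.h_sub ξ hξ)
      ((Finset.filter_subset _ _).trans Finset.sdiff_subset)

theorem Coherent.extendH_eq_union (hsymm : ∀ α β, f α β = f β α)
    (hlt : ∀ α β γ, γ ∈ f α β → γ < α ∧ γ < β) (hc : Coherent p q) (hξp : ξ ∈ p.a)
    (hξq : ξ ∈ q.a) : extendH p q ξ = p.h ξ ∪ q.h ξ := by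
  have hamalgam : IsAmalgam p q (extendH p q) := isAmalgam_of_eq_extendH fun _ _ => rfl
  ext ζ
  rw [Finset.mem_union]
  by_cases hζp : ζ ∈ p.a
  · rw [hamalgam.mem_iff ξ hξp ζ hζp]
    refine ⟨Or.inl, fun h => h.elim id fun h => ?_⟩
    exact (hc.h_iff ξ hξp hξq ζ hζp (q.h_sub ξ hξq h)).2 h
  · have hnot : ζ ∉ p.h ξ := fun h => hζp (p.h_sub ξ hξp h)
    by_cases hζq : ζ ∈ q.a
    · rw [hamalgam.mem_iff_delta ξ hξp ζ hζq hζp,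
        (hc.symm hsymm).mem_h_iff_delta hlt hξq hξp hζp, or_iff_right hnot]
      refine exists_congr fun δ => ?_
      rw [deltaIs_comm]
      exact and_congr_right fun hδ => hc.h_iff ξ hξp hξq δ hδ.mem_right hδ.mem_left
    · refine iff_of_false (fun h => ?_) ?_
      · simpa [hζp, hζq] using hamalgam.sub ξ hξp h
      · exact not_or.2 ⟨hnot, fun h => hζq (q.h_sub ξ hξq h)⟩

theorem Coherent.compatible (hsymm : ∀ α β, f α β = f β α)
    (hlt : ∀ α β γ, γ ∈ f α β → γ < α ∧ γ < β) (hc : Coherent p q) :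
    ∃ r : PfCond f, PfLe r p ∧ PfLe r q := by
  let H : Ordinal → Finset Ordinal := fun ξ => if ξ ∈ p.a then extendH p q ξ else extendH q p ξ
  let I : Ordinal → Ordinal → Finset Ordinal := fun ξ η =>
    if ξ ∈ p.a ∧ η ∈ p.a then p.i ξ η else if ξ ∈ q.a ∧ η ∈ q.a then q.i ξ η
    else (p.a ∪ q.a).filter (· ∈ f ξ η)
  have hp : IsAmalgam p q H := isAmalgam_of_eq_extendH fun ξ hξ => if_pos hξ
  have hq : IsAmalgam q p H := isAmalgam_of_eq_extendH fun ξ hξ => by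
    by_cases hξp : ξ ∈ p.a
    · rw [(hc.symm hsymm).extendH_eq_union hsymm hlt hξ hξp, Finset.union_comm,
        ← hc.extendH_eq_union hsymm hlt hξp hξ]
      exact if_pos hξp
    · exact if_neg hξp
  have hIp : ∀ ξ ∈ p.a, ∀ η ∈ p.a, I ξ η = p.i ξ η := fun ξ hξ η hη => if_pos ⟨hξ, hη⟩
  have hIq : ∀ ξ ∈ q.a, ∀ η ∈ q.a, ξ ≠ η → I ξ η = q.i ξ η := fun ξ hξ η hη hne => by
    by_cases h : ξ ∈ p.a ∧ η ∈ p.a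
    · rw [hIp ξ h.1 η h.2, hc.i_eq ξ h.1 hξ η h.2 hη hne]
    · simp only [I, if_neg h, if_pos (And.intro hξ hη)]
  have hImixed : ∀ ξ η, ¬ (ξ ∈ p.a ∧ η ∈ p.a) → ¬ (ξ ∈ q.a ∧ η ∈ q.a) →
      I ξ η = (p.a ∪ q.a).filter (· ∈ f ξ η) := fun ξ η h₁ h₂ => by
    simp only [I, if_neg h₁, if_neg h₂]
  have hle : ∀ {p q : PfCond f}, IsAmalgam p q H → ∀ ξ ∈ p.a, H ξ ∩ p.a = p.h ξ := by
    intro p q hp ξ hξ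
    ext ζ
    rw [Finset.mem_inter]
    exact ⟨fun h => (hp.mem_iff ξ hξ ζ h.2).1 h.1, fun h =>
      ⟨(hp.mem_iff ξ hξ ζ (p.h_sub ξ hξ h)).2 h, p.h_sub ξ hξ h⟩⟩
  refine ⟨⟨p.a ∪ q.a, H, I, ?_, ?_, ?_, ?_, ?_, ?_, ?_, ?_⟩,
    ⟨Finset.subset_union_left, hle hp, fun ξ hξ η hη _ => hIp ξ hξ η hη⟩,
    ⟨Finset.subset_union_right, hle hq, hIq⟩⟩
  · exact fun ξ hξ => (Finset.mem_union.1 hξ).elim (p.a_lt ξ) (q.a_lt ξ)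
  · refine fun ξ hξ => (Finset.mem_union.1 hξ).elim (hp.sub ξ) fun h => ?_
    rw [Finset.union_comm]
    exact hq.sub ξ h
  · exact fun ξ hξ => (Finset.mem_union.1 hξ).elim hp.self_mem hq.self_mem
  · exact fun ξ hξ η hη => (Finset.mem_union.1 hξ).elim (fun h => hp.le_of_mem h hη)
      fun h => hq.le_of_mem h hη
  · intro ξ η
    simp only [I, p.i_symm ξ η, q.i_symm ξ η, hsymm ξ η, and_comm]
  · intro ξ hξ η hη hne ν hν
    by_cases h₁ : ξ ∈ p.a ∧ η ∈ p.a
    · rw [hIp ξ h₁.1 η h₁.2] at hν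
      exact p.i_sub_f ξ h₁.1 η h₁.2 hne ν hν
    by_cases h₂ : ξ ∈ q.a ∧ η ∈ q.a
    · rw [hIq ξ h₂.1 η h₂.2 hne] at hν
      exact q.i_sub_f ξ h₂.1 η h₂.2 hne ν hν
    rw [hImixed ξ η h₁ h₂] at hν
    exact (Finset.mem_filter.1 hν).2
  · intro ξ hξ η hη hne
    by_cases h₁ : ξ ∈ p.a ∧ η ∈ p.a
    · rw [hIp ξ h₁.1 η h₁.2]
      exact (p.i_sub_a ξ h₁.1 η h₁.2 hne).trans Finset.subset_union_left
    by_cases h₂ : ξ ∈ q.a ∧ η ∈ q.a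
    · rw [hIq ξ h₂.1 η h₂.2 hne]
      exact (q.i_sub_a ξ h₂.1 η h₂.2 hne).trans Finset.subset_union_right
    rw [hImixed ξ η h₁ h₂]
    exact Finset.filter_subset _ _
  · intro ξ hξ η hη hne ζ hζ
    rw [Finset.mem_biUnion]
    by_cases h₁ : ξ ∈ p.a ∧ η ∈ p.a
    · rw [hIp ξ h₁.1 η h₁.2]
      exact hp.exists_of_mem_ostar h₁.1 h₁.2 hne hζ
    by_cases h₂ : ξ ∈ q.a ∧ η ∈ q.a
    · rw [hIq ξ h₂.1 η h₂.2 hne]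
      exact hq.exists_of_mem_ostar h₂.1 h₂.2 hne hζ
    rw [hImixed ξ η h₁ h₂]
    simp only [Finset.mem_filter, and_assoc]
    rw [Finset.mem_union] at hξ hη
    by_cases hξp : ξ ∈ p.a
    · have hηp : η ∉ p.a := fun h => h₁ ⟨hξp, h⟩
      have hηq := hη.resolve_left hηp
      exact hc.exists_of_mem_ostar hsymm hp hq hξp (fun h => h₂ ⟨h, hηq⟩) hηq hηp hζ
    · have hξq := hξ.resolve_left hξp
      have hηq : η ∉ q.a := fun h => h₂ ⟨hξq, h⟩
      rw [Finset.union_comm]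
      exact (hc.symm hsymm).exists_of_mem_ostar hsymm hq hp hξq hξp (hη.resolve_right hηq) hηq hζ

end Amalgamation

theorem stmt14
    (f : Ordinal → Ordinal → Set Ordinal)
    (hsymm : ∀ α β, f α β = f β α)
    (hlt : ∀ α β γ, γ ∈ f α β → γ < α ∧ γ < β)
    (hcount : ∀ α β, (f α β).Countable)
    (hΔ : IsDeltaFunction f)
    (F : Set (PfCond f)) (hF : ¬ F.Countable) :
    ∃ p ∈ F, ∃ q ∈ F, p ≠ q ∧ GoodTwins p q ∧
      ∃ r : PfCond f, PfLe r p ∧ PfLe r q := by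
  obtain ⟨p, hp, q, hq, hne, htwins⟩ := exists_goodTwins hcount hΔ hF
  exact ⟨p, hp, q, hq, hne, htwins, (htwins.coherent hsymm).compatible hsymm hlt⟩
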